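/- In the universal enveloping algebra U(gl(m,ℂ)), for all q ≥ 0 and all indices 1 ≤ i,j,k,l ≤ m, the commutator identity [e_{ij}, ẽ_{kl}^q] = δ_{jl}·ẽ_{ki}^q − δ_{ik}·ẽ_{jl}^q holds, where [a,b] = ab − ba. -/

import Mathlib

open Finset

attribute [local instance 100] LieRing.ofAssociativeRing

/-- `gl(m, ℂ)`: the Lie algebra of `m × m` complex matrices. -/
abbrev glm (m : ℕ) := Matrix (Fin m) (Fin m) ℂ

/-- The universal enveloping algebra `U(gl(m,ℂ))`. -/
abbrev UEA (m : ℕ) := UniversalEnvelopingAlgebra ℂ (glm m)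

/-- The image of the matrix unit `e_{kl}` in `U(gl(m,ℂ))`. -/
noncomputable def E {m : ℕ} (k l : Fin m) : UEA m :=
  UniversalEnvelopingAlgebra.ι ℂ (Matrix.single k l (1 : ℂ))

/-- `ẽ_{kl}^q`, defined by `ẽ_{kl}^0 = δ_{kl}` and `ẽ_{kl}^{q+1} = −Σ_i e_{ik} ẽ_{il}^q`. -/
noncomputable def Etil {m : ℕ} : ℕ → Fin m → Fin m → UEA m
  | 0, k, l => if k = l then 1 else 0
  | q + 1, k, l => -∑ i, E i k * Etil q i l

theorem E_comm {m : ℕ} (i j p k : Fin m) :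
    (E i j * E p k : UEA m) =
      E p k * E i j + ((if j = p then E i k else 0) - (if i = k then E p j else 0)) := by
  have h : ⁅(E i j : UEA m), E p k⁆ =
      UniversalEnvelopingAlgebra.ι ℂ ⁅(Matrix.single i j (1 : ℂ) : glm m), Matrix.single p k (1 : ℂ)⁆ :=
    (LieHom.map_lie _ _ _).symm
  rw [LieRing.of_associative_ring_bracket, LieRing.of_associative_ring_bracket, map_sub] at h
  rw [← sub_eq_iff_eq_add', h]
  congr 1
  · by_cases hjp : j = p
    · subst hjp
      simp [E]
    · simp [hjp, Matrix.single_mul_single_of_ne]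
  · by_cases hik : i = k
    · subst hik
      simp [E]
    · have hki : ¬ k = i := fun h => hik h.symm
      simp [hik, hki, Matrix.single_mul_single_of_ne]

/-- `[e_{ij}, ẽ_{kl}^q] = δ_{jl} ẽ_{ki}^q − δ_{ik} ẽ_{jl}^q`. -/
theorem statement3 (m : ℕ) (hm : 1 ≤ m) (q : ℕ) (i j k l : Fin m) :
    E i j * Etil q k l - Etil q k l * E i j =
      (if j = l then Etil (m := m) q k i else 0) -
        (if i = k then Etil (m := m) q j l else 0) := by
  induction q generalizing i j k l with
  | zero =>
    simp only [Etil]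
    by_cases h1 : k = l <;> by_cases h2 : j = l <;> by_cases h3 : i = k <;> subst_vars <;>
      simp_all [eq_comm]
  | succ q ih =>
    have key : ∀ p : Fin m, E i j * (E p k * Etil q p l) - E p k * Etil q p l * E i j =
        ((if j = p then E i k * Etil q p l else 0) - (if i = k then E p j * Etil q p l else 0)) +
        ((if j = l then E p k * Etil q p i else 0) -
          (if i = p then E p k * Etil q j l else 0)) := by
      intro p
      have h1 : E i j * (E p k * Etil q p l) - E p k * Etil q p l * E i j =
          (E i j * E p k - E p k * E i j) * Etil q p l +
          E p k * (E i j * Etil q p l - Etil q p l * E i j) := by noncomm_ring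
      rw [h1, ih, E_comm, add_sub_cancel_left]
      simp only [sub_mul, mul_sub, ite_mul, mul_ite, zero_mul, mul_zero]
    have h2 : E i j * Etil (q+1) k l - Etil (q+1) k l * E i j =
        -∑ p, (E i j * (E p k * Etil q p l) - E p k * Etil q p l * E i j) := by
      simp only [Etil, Finset.sum_sub_distrib, Finset.mul_sum, Finset.sum_mul, mul_neg, neg_mul]
      abel
    rw [h2, Finset.sum_congr rfl (fun p _ => key p)]
    simp only [Finset.sum_add_distrib, Finset.sum_sub_distrib, Finset.sum_ite_eq,
      Finset.mem_univ, if_true, Etil]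
    split_ifs <;> simp <;> abel
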